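/- arXiv:2012.01958 — 2 statements merged into one kernel-verified Lean document; each statement's English description precedes it below -/
import Mathlib

section
/- Let d ≥ 1, let e ∈ ℂ be a primitive d-th root of unity and α_0,…,α_n ∈ ℕ. Let A be the ℂ-subalgebra of ℂ[x_0,…,x_n] generated by the monomials x^a with |a| = d and d ∣ ⟨α,a⟩. Then a polynomial p belongs to A if and only if p is fixed by both algebra endomorphisms given by the substitutions x_i ↦ e^{α_i}·x_i and x_i ↦ e·x_i. -/
open MvPolynomial

/-!
Diagonal substitutions act on monomials by scalars, so over a domain a polynomial is invariant
exactly when each of its monomials `x^a` is, that is, when `d ∣ |a|` and `d ∣ ⟨α, a⟩`.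
It remains to see that such exponents are sums of exponents of the same kind with `|a| = d`. If
`|a| ≥ 2d`, the Erdős–Ginzburg–Ziv theorem, applied to the multiset in which each weight `α i` is
repeated `a i` times, splits off a summand of degree `d` whose weight is divisible by `d`.
-/

section Exponents

open Finsupp

variable {σ : Type*}

theorem exists_le_card_eq_dvd_sum_map {n : ℕ} (w : σ → ℤ) {s : Multiset σ}
    (hs : 2 * n - 1 ≤ s.card) : ∃ t ≤ s, t.card = n ∧ ↑n ∣ (t.map w).sum := by
  classical
  obtain ⟨t, hts, ht_card, ht_dvd⟩ :=
    Int.erdos_ginzburg_ziv (s := s.toEnumFinset) (w ∘ Prod.fst) (by simpa using hs)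
  exact ⟨t.1.map Prod.fst, Multiset.map_fst_le_of_subset_toEnumFinset hts, by simpa using ht_card,
    by simpa using ht_dvd⟩

theorem sum_map_toMultiset_eq_weight {M : Type*} [AddCommMonoid M] (w : σ → M) (a : σ →₀ ℕ) :
    (a.toMultiset.map w).sum = weight w a := by
  rw [toMultiset_map, sum_toMultiset, sum_mapDomain_index (by simp) (by simp [add_smul]),
    weight_apply]

theorem exists_le_degree_eq_dvd_weight {n : ℕ} (w : σ → ℤ) {a : σ →₀ ℕ}
    (ha : 2 * n - 1 ≤ a.degree) : ∃ b ≤ a, b.degree = n ∧ ↑n ∣ weight w b := by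
  classical
  obtain ⟨t, hta, ht_card, ht_dvd⟩ :=
    exists_le_card_eq_dvd_sum_map w (s := a.toMultiset) (by rwa [card_toMultiset])
  obtain ⟨b, rfl⟩ := (orderIsoMultiset (ι := σ)).surjective t
  rw [coe_orderIsoMultiset] at hta ht_card ht_dvd
  exact ⟨b, orderIsoMultiset.le_iff_le.1 hta, by rwa [card_toMultiset] at ht_card,
    by rwa [sum_map_toMultiset_eq_weight] at ht_dvd⟩

theorem prod_pow_pow_eq_pow_weight {M : Type*} [CommMonoid M] (e : M) (α : σ → ℕ)
    (m : σ →₀ ℕ) :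
    (m.prod fun i k => (e ^ α i) ^ k) = e ^ weight α m := by
  simp only [Finsupp.prod, ← pow_mul, Finset.prod_pow_eq_pow_sum, weight_apply, Finsupp.sum,
    smul_eq_mul, mul_comm]

theorem prod_pow_eq_pow_degree {M : Type*} [CommMonoid M] (e : M) (m : σ →₀ ℕ) :
    (m.prod fun _ k => e ^ k) = e ^ m.degree :=
  Finset.prod_pow_eq_pow_sum _ _ _

/-- The exponents `a` with `|a| = d` and `d ∣ ⟨α, a⟩`, i.e. those of the degree-`d` monomials
invariant under `xᵢ ↦ e ^ αᵢ xᵢ` for a primitive `d`-th root of unity `e`. -/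
def invariantExponents (d : ℕ) (α : σ → ℕ) : Set (σ →₀ ℕ) :=
  {a | a.degree = d ∧ d ∣ weight α a}

theorem exists_add_mem_invariantExponents {d : ℕ} (α : σ → ℕ) {a : σ →₀ ℕ}
    (ha : 2 * d - 1 ≤ a.degree) : ∃ b ∈ invariantExponents d α, ∃ c, a = b + c := by
  obtain ⟨b, hba, hb_deg, hb_dvd⟩ := exists_le_degree_eq_dvd_weight (fun i => (α i : ℤ)) ha
  have weight_cast : weight (fun i => (α i : ℤ)) b = (weight α b : ℕ) := by
    simp [weight_apply, Finsupp.sum]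
  exact ⟨b, ⟨hb_deg, by rwa [weight_cast, Int.natCast_dvd_natCast] at hb_dvd⟩,
    exists_add_of_le hba⟩

theorem mem_closure_invariantExponents {d : ℕ} {α : σ → ℕ} {a : σ →₀ ℕ}
    (ha_deg : d ∣ a.degree) (ha_dvd : d ∣ weight α a) :
    a ∈ AddSubmonoid.closure (invariantExponents d α) := by
  obtain ⟨k, hk⟩ := ha_deg
  induction k generalizing a with
  | zero =>
    obtain rfl : a = 0 := by simpa [degree_eq_zero_iff] using hk
    exact zero_mem _
  | succ k ih =>
    obtain rfl | hk_pos := k.eq_zero_or_pos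
    · exact AddSubmonoid.subset_closure ⟨by simpa using hk, ha_dvd⟩
    have two_mul_sub_one_le : 2 * d - 1 ≤ a.degree := by
      rw [hk]
      nlinarith [Nat.sub_le (2 * d) 1]
    obtain ⟨b, hb, c, rfl⟩ := exists_add_mem_invariantExponents α two_mul_sub_one_le
    refine add_mem (AddSubmonoid.subset_closure hb) (ih ?_ ?_)
    · rwa [map_add, Nat.dvd_add_right hb.2] at ha_dvd
    · rw [map_add, hb.1] at hk
      linarith

end Exponents

section Scaling

open Finsupp

variable {σ R : Type*} [CommSemiring R]

/-- The diagonal substitution `xᵢ ↦ cᵢ xᵢ`; the generators of the group `Λ̄` are the cases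
`cᵢ = e ^ αᵢ` and `cᵢ = e`. -/
noncomputable def scaleVars (c : σ → R) : MvPolynomial σ R →ₐ[R] MvPolynomial σ R :=
  aeval fun i => C (c i) * X i

theorem scaleVars_monomial (c : σ → R) (a : σ →₀ ℕ) (r : R) :
    scaleVars c (monomial a r) = monomial a ((a.prod fun i k => c i ^ k) * r) := by
  rw [scaleVars, aeval_monomial, monomial_eq (s := a)]
  simp only [Finsupp.prod, algebraMap_eq, mul_pow, Finset.prod_mul_distrib, C_mul,
    map_prod, map_pow]
  ring

theorem coeff_scaleVars (c : σ → R) (p : MvPolynomial σ R) (m : σ →₀ ℕ) :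
    coeff m (scaleVars c p) = (m.prod fun i k => c i ^ k) * coeff m p := by
  classical
  induction p using MvPolynomial.induction_on' with
  | add p q hp hq => rw [map_add, coeff_add, coeff_add, hp, hq, mul_add]
  | monomial a r =>
    rw [scaleVars_monomial, coeff_monomial, coeff_monomial]
    split_ifs with h
    · rw [h]
    · rw [mul_zero]

theorem scaleVars_eq_self_iff [IsCancelMulZero R] {c : σ → R} {p : MvPolynomial σ R} :
    scaleVars c p = p ↔ ∀ m ∈ p.support, (m.prod fun i k => c i ^ k) = 1 := by
  rw [MvPolynomial.ext_iff]
  refine forall_congr' fun m => ?_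
  rw [coeff_scaleVars, MvPolynomial.mem_support_iff]
  obtain hm | hm := eq_or_ne (coeff m p) 0
  · simp [hm]
  · simp [hm, mul_eq_right₀ hm]

theorem scaleVars_eq_self_of_mem_adjoin {S : Set (σ →₀ ℕ)} {c : σ → R} {p : MvPolynomial σ R}
    (hS : ∀ a ∈ S, (a.prod fun i k => c i ^ k) = 1)
    (hp : p ∈ Algebra.adjoin R ((monomial · (1 : R)) '' S)) : scaleVars c p = p := by
  have fixes_monomials : ∀ a ∈ S, scaleVars c (monomial a 1) = monomial a 1 := fun a ha => by
    rw [scaleVars_monomial, hS a ha, one_mul]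
  exact AlgHom.adjoin_le_equalizer (scaleVars c) (AlgHom.id R _)
    (Set.forall_mem_image.2 fixes_monomials) hp

variable [IsCancelMulZero R] {d : ℕ} {e : R}

theorem scaleVars_pow_eq_self_iff (he : IsPrimitiveRoot e d) {α : σ → ℕ}
    {p : MvPolynomial σ R} :
    scaleVars (fun i => e ^ α i) p = p ↔ ∀ m ∈ p.support, d ∣ weight α m := by
  simp only [scaleVars_eq_self_iff, prod_pow_pow_eq_pow_weight, he.pow_eq_one_iff_dvd]

theorem scaleVars_const_eq_self_iff (he : IsPrimitiveRoot e d) {p : MvPolynomial σ R} :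
    scaleVars (fun _ => e) p = p ↔ ∀ m ∈ p.support, d ∣ m.degree := by
  simp only [scaleVars_eq_self_iff, prod_pow_eq_pow_degree, he.pow_eq_one_iff_dvd]

end Scaling

theorem monomial_mem_adjoin_of_mem_closure {σ R : Type*} [CommSemiring R] {S : Set (σ →₀ ℕ)}
    {a : σ →₀ ℕ} (ha : a ∈ AddSubmonoid.closure S) (r : R) :
    monomial a r ∈ Algebra.adjoin R ((monomial · (1 : R)) '' S) := by
  suffices monomial_one_mem : monomial a (1 : R) ∈ Algebra.adjoin R ((monomial · (1 : R)) '' S) by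
    simpa [smul_monomial] using Subalgebra.smul_mem _ monomial_one_mem r
  induction ha using AddSubmonoid.closure_induction with
  | mem a ha => exact Algebra.subset_adjoin ⟨a, ha, rfl⟩
  | zero => exact one_mem _
  | add a b _ _ iha ihb => simpa [monomial_mul] using mul_mem iha ihb

theorem image_monomial_invariantExponents {σ : Type*} (R : Type*) [Fintype σ] [CommSemiring R]
    (d : ℕ) (α : σ → ℕ) :
    (monomial · (1 : R)) '' invariantExponents d α =
      {q | ∃ a : σ → ℕ, (∑ i, a i = d) ∧ (d ∣ ∑ i, α i * a i) ∧ q = ∏ i, X i ^ a i} := by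
  ext q
  rw [Set.mem_image, Finsupp.equivFunOnFinite.exists_congr_left]
  simp [invariantExponents, Finsupp.degree_eq_sum, Finsupp.weight_eq_sum, monomial_eq,
    Finsupp.prod_fintype, mul_comm, and_assoc, eq_comm]

theorem stmt2_general {σ R : Type*} [CommSemiring R] [IsCancelMulZero R] {d : ℕ} {e : R}
    (he : IsPrimitiveRoot e d) (α : σ → ℕ) (p : MvPolynomial σ R) :
    p ∈ Algebra.adjoin R ((monomial · (1 : R)) '' invariantExponents d α) ↔
      scaleVars (fun i => e ^ α i) p = p ∧ scaleVars (fun _ => e) p = p := by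
  constructor
  · refine fun hp => ⟨scaleVars_eq_self_of_mem_adjoin (fun a ha => ?_) hp,
      scaleVars_eq_self_of_mem_adjoin (fun a ha => ?_) hp⟩
    · rw [prod_pow_pow_eq_pow_weight, he.pow_eq_one_iff_dvd]
      exact ha.2
    · rw [prod_pow_eq_pow_degree, ha.1, he.pow_eq_one]
  · rintro ⟨hα, hdeg⟩
    rw [scaleVars_pow_eq_self_iff he] at hα
    rw [scaleVars_const_eq_self_iff he] at hdeg
    rw [p.as_sum]
    exact sum_mem fun m hm =>
      monomial_mem_adjoin_of_mem_closure
        (mem_closure_invariantExponents (hdeg m hm) (hα m hm)) _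

/-- The degree-d Λ-invariant monomials generate the ring of invariants of the
abelian group Λ̄ generated by the substitutions xᵢ ↦ e^{αᵢ}·xᵢ and xᵢ ↦ e·xᵢ
(Theorems 3.1 and 3.3 of the paper). -/
theorem stmt2 (n d : ℕ) (hn : 1 ≤ n) (hd : 1 ≤ d) (e : ℂ)
    (he : IsPrimitiveRoot e d) (α : Fin (n + 1) → ℕ)
    (p : MvPolynomial (Fin (n + 1)) ℂ) :
    p ∈ Algebra.adjoin ℂ { q : MvPolynomial (Fin (n + 1)) ℂ |
        ∃ a : Fin (n + 1) → ℕ,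
          (∑ i, a i = d) ∧ (d ∣ ∑ i, α i * a i) ∧ q = ∏ i, X i ^ a i } ↔
      (aeval (fun i => C (e ^ α i) * X i) p = p ∧
        aeval (fun i => C e * X i) p = p) := by
  rw [← image_monomial_invariantExponents]
  exact stmt2_general he α p
end

section
/- Let t ≥ 1 and let w ∈ ℕ³ have exactly one coordinate equal to zero, say w_k = 0 and w_i, w_j > 0 where {i,j,k} = {1,2,3}. Then either w ∈ H_{3t}, or both w + f_i ∉ H_{3t} and w + f_j ∉ H_{3t}. -/
/-- `HH t` is the submonoid H_{3t} of ℕ³ of the paper: `HH 1` = H₃ is generated by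
(3,0,0),(0,3,0),(0,0,3),(1,1,1); for t ≥ 2, H_{3t} is generated by (3t,0,0),(0,3t,0),
(0,0,3t) together with (1,1,1) + H_{3(t−1)}.  (Here `HH 0 = ⊥ = {0}`, so that the
t = 1 case of the recursion reproduces exactly H₃.) -/
def HH : ℕ → AddSubmonoid (Fin 3 → ℕ)
  | 0 => ⊥
  | (t + 1) => AddSubmonoid.closure
      ({Pi.single 0 (3 * (t + 1)), Pi.single 1 (3 * (t + 1)),
          Pi.single 2 (3 * (t + 1))} ∪
        (fun h => (fun _ => 1) + h) '' ((HH t : AddSubmonoid (Fin 3 → ℕ)) : Set (Fin 3 → ℕ)))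

/-!
Every element of `m + H_{3(t-1)}` has only positive coordinates, so no such generator can occur in
a sum with a zero coordinate. An element of `H_{3t}` with a zero coordinate is therefore a
combination of `f₁, f₂, f₃` alone, that is, all its coordinates are divisible by `3t`, and adding
an `f_i` does not affect this divisibility.
-/

theorem mem_closure_union_iff_of_map_eq_zero {M N : Type*} [AddMonoid M] [AddCommMonoid N]
    [Subsingleton (AddUnits N)] (f : M →+ N) {A B : Set M} (hB : ∀ b ∈ B, f b ≠ 0)
    {x : M} (hx : f x = 0) :
    x ∈ AddSubmonoid.closure (A ∪ B) ↔ x ∈ AddSubmonoid.closure A := by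
  refine ⟨fun h => ?_, fun h => AddSubmonoid.closure_mono Set.subset_union_left h⟩
  induction h using AddSubmonoid.closure_induction with
  | mem y hy => exact AddSubmonoid.subset_closure (hy.resolve_right fun hyB => hB y hyB hx)
  | zero => exact zero_mem _
  | add a b _ _ iha ihb =>
    rw [map_add, add_eq_zero] at hx
    exact add_mem (iha hx.1) (ihb hx.2)

theorem closure_range_single_eq_pi_multiples {ι M : Type*} [Finite ι] [DecidableEq ι]
    [AddMonoid M] (d : M) :
    AddSubmonoid.closure (Set.range fun i : ι => (Pi.single i d : ι → M)) =
      AddSubmonoid.pi Set.univ fun _ => AddSubmonoid.multiples d := by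
  simp only [← AddSubmonoid.iSup_map_single, AddSubmonoid.multiples_eq_closure,
    AddMonoidHom.map_mclosure, ← AddSubmonoid.closure_iUnion, Set.image_singleton,
    AddMonoidHom.single_apply, Set.iUnion_singleton_eq_range]

theorem HH_succ (t : ℕ) :
    HH (t + 1) = AddSubmonoid.closure
      ((Set.range fun i => Pi.single i (3 * (t + 1))) ∪ (fun h => 1 + h) '' (HH t : Set _)) := by
  have range_eq : (Set.range fun i : Fin 3 => (Pi.single i (3 * (t + 1)) : Fin 3 → ℕ)) =
      {Pi.single 0 (3 * (t + 1)), Pi.single 1 (3 * (t + 1)), Pi.single 2 (3 * (t + 1))} := by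
    ext x
    simp [Fin.exists_fin_succ, eq_comm]
  rw [range_eq]
  rfl

theorem mem_HH_iff_forall_dvd_of_apply_eq_zero {t : ℕ} {w : Fin 3 → ℕ} {k : Fin 3}
    (hwk : w k = 0) : w ∈ HH t ↔ ∀ l, 3 * t ∣ w l := by
  cases t with
  | zero => simp [HH, funext_iff]
  | succ t =>
    have eval_ne_zero : ∀ y ∈ (fun h => 1 + h) '' (HH t : Set (Fin 3 → ℕ)),
        Pi.evalAddMonoidHom (fun _ => ℕ) k y ≠ 0 := by
      rintro _ ⟨h, -, rfl⟩
      simp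
    rw [HH_succ, mem_closure_union_iff_of_map_eq_zero _ eval_ne_zero hwk,
      closure_range_single_eq_pi_multiples]
    simp [AddSubmonoid.mem_pi, AddSubmonoid.mem_multiples_iff, dvd_iff_exists_eq_mul_left, eq_comm]

theorem add_single_mem_HH_iff {t : ℕ} {w : Fin 3 → ℕ} {i k : Fin 3} (hik : i ≠ k)
    (hwk : w k = 0) : w + Pi.single i (3 * t) ∈ HH t ↔ w ∈ HH t := by
  have apply_k : (w + Pi.single i (3 * t) : Fin 3 → ℕ) k = 0 := by simp [hwk, hik.symm]
  have dvd_single (l : Fin 3) : 3 * t ∣ (Pi.single i (3 * t) : Fin 3 → ℕ) l := by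
    obtain rfl | hl := eq_or_ne l i <;> simp [*]
  simp only [mem_HH_iff_forall_dvd_of_apply_eq_zero apply_k,
    mem_HH_iff_forall_dvd_of_apply_eq_zero hwk, Pi.add_apply,
    ← Nat.dvd_add_iff_left (dvd_single _)]

/-- Corollary 5.5: for w ∈ ℕ³ with exactly one zero coordinate (w_k = 0, w_i, w_j > 0),
either w ∈ H_{3t}, or both w + f_i ∉ H_{3t} and w + f_j ∉ H_{3t}. -/
theorem stmt14 (t : ℕ) (ht : 1 ≤ t) (w : Fin 3 → ℕ) (i j k : Fin 3)
    (hij : i ≠ j) (hik : i ≠ k) (hjk : j ≠ k)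
    (hwk : w k = 0) (hwi : 0 < w i) (hwj : 0 < w j) :
    w ∈ HH t ∨
      (w + Pi.single i (3 * t) ∉ HH t ∧ w + Pi.single j (3 * t) ∉ HH t) := by
  rw [add_single_mem_HH_iff hik hwk, add_single_mem_HH_iff hjk hwk, and_self]
  exact em _
end
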